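/- For all integers n ≥ 0, the number of (4,9)-regular overpartitions satisfies R̄_{4,9}(24n+20) ≡ 0 (mod 27). -/

import Mathlib

/-- Number of partitions of `a` with no part divisible by `ℓ` or `μ`
(the non-overlined parts of an `(ℓ,μ)`-regular overpartition). -/
def regularCount (ℓ μ a : ℕ) : ℕ :=
  Fintype.card {p : a.Partition // ∀ i ∈ p.parts, ¬ ℓ ∣ i ∧ ¬ μ ∣ i}

/-- Number of partitions of `a` into distinct parts with no part divisible by `ℓ` or `μ`
(the overlined parts of an `(ℓ,μ)`-regular overpartition). -/
def regularDistinctCount (ℓ μ a : ℕ) : ℕ :=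
  Fintype.card {p : a.Partition // p.parts.Nodup ∧ ∀ i ∈ p.parts, ¬ ℓ ∣ i ∧ ¬ μ ∣ i}

/-- `Rbar ℓ μ n` is the number of `(ℓ,μ)`-regular overpartitions of `n`: pairs `(λ, δ)`
where `λ` is a partition, `δ` is a partition into distinct parts, `|λ| + |δ| = n`,
and no part of `λ` or `δ` is divisible by `ℓ` or by `μ`. -/
def Rbar (ℓ μ n : ℕ) : ℕ :=
  ∑ ab ∈ Finset.HasAntidiagonal.antidiagonal n, regularCount ℓ μ ab.1 * regularDistinctCount ℓ μ ab.2

section Work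
open PowerSeries Finset

noncomputable section ThetaSec

abbrev EE {R : Type} [CommRing R] (k : ℕ) [NeZero k] : PowerSeries R →ₐ[R] PowerSeries R :=
  PowerSeries.expand k (NeZero.ne k)

def th (w : ℤ → ℤ) (k : ℕ) : PowerSeries ℤ :=
  PowerSeries.mk fun n => ∑ m ∈ Finset.Icc (-(n:ℤ)) n, if (k:ℤ) * m ^ 2 = n then w m else 0

lemma sq_bd {k m n : ℤ} (hk : 0 < k) (hn : 0 ≤ n) (h : k * m ^ 2 ≤ n) : -n ≤ m ∧ m ≤ n := by
  constructor <;> nlinarith [sq_nonneg m, sq_nonneg (m-1), sq_nonneg (m+1)]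

lemma coeff_th (w : ℤ → ℤ) {k : ℕ} (hk : 0 < k) {n M : ℕ} (h : n ≤ M) :
    coeff n (th w k) = ∑ m ∈ Finset.Icc (-(M:ℤ)) M, if (k:ℤ) * m ^ 2 = n then w m else 0 := by
  rw [th, coeff_mk]
  apply Finset.sum_subset
  · intro m; simp only [Finset.mem_Icc]; omega
  · intro m _ h2
    rw [if_neg]
    intro h3
    apply h2
    rw [Finset.mem_Icc]
    exact sq_bd (by exact_mod_cast hk) (by positivity) h3.le

lemma th_add (w v : ℤ → ℤ) (k : ℕ) : th (fun m => w m + v m) k = th w k + th v k := by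
  ext n
  simp only [th, coeff_mk, map_add, ← Finset.sum_add_distrib]
  refine Finset.sum_congr rfl fun m _ => ?_
  split_ifs <;> simp

lemma coeff_th_mul (w v : ℤ → ℤ) {k l : ℕ} (hk : 0 < k) (hl : 0 < l) (N : ℕ) :
    coeff N (th w k * th v l) = ∑ p ∈ Finset.Icc (-(N:ℤ)) N ×ˢ Finset.Icc (-(N:ℤ)) N,
      if (k:ℤ) * p.1 ^ 2 + l * p.2 ^ 2 = N then w p.1 * v p.2 else 0 := by
  rw [coeff_mul]
  have : ∀ q ∈ Finset.HasAntidiagonal.antidiagonal N, coeff q.1 (th w k) * coeff q.2 (th v l) =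
      ∑ p ∈ Finset.Icc (-(N:ℤ)) N ×ˢ Finset.Icc (-(N:ℤ)) N,
        if (k:ℤ) * p.1 ^ 2 = q.1 ∧ l * p.2 ^ 2 = q.2 then w p.1 * v p.2 else 0 := by
    intro q hq
    rw [Finset.HasAntidiagonal.mem_antidiagonal] at hq
    rw [coeff_th w hk (show q.1 ≤ N by omega), coeff_th v hl (show q.2 ≤ N by omega),
      Finset.sum_mul_sum, Finset.sum_product]
    refine Finset.sum_congr rfl fun a _ => Finset.sum_congr rfl fun b _ => ?_
    by_cases h1 : (k:ℤ) * a ^ 2 = q.1 <;> by_cases h2 : (l:ℤ) * b ^ 2 = q.2 <;> simp [h1, h2]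
  rw [Finset.sum_congr rfl this, Finset.sum_comm]
  refine Finset.sum_congr rfl fun p _ => ?_
  split_ifs with h
  · rw [Finset.sum_eq_single (((k:ℤ) * p.1 ^ 2).toNat, ((l:ℤ) * p.2 ^ 2).toNat)]
    · rw [if_pos]
      constructor <;> rw [Int.toNat_of_nonneg (by positivity)]
    · intro q _ h2
      rw [if_neg]
      rintro ⟨h3, h4⟩
      apply h2
      ext <;> simp [h3, h4]
    · intro h2
      exfalso; apply h2
      rw [Finset.HasAntidiagonal.mem_antidiagonal]
      have h3 : 0 ≤ (k:ℤ) * p.1 ^ 2 := by positivity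
      have h4 : 0 ≤ (l:ℤ) * p.2 ^ 2 := by positivity
      dsimp only
      omega
  · apply Finset.sum_eq_zero
    intro q hq
    rw [Finset.HasAntidiagonal.mem_antidiagonal] at hq
    rw [if_neg]
    rintro ⟨h3, h4⟩
    apply h
    rw [h3, h4]; exact_mod_cast hq

lemma coeff_th_zero (w : ℤ → ℤ) (k : ℕ) : coeff 0 (th w k) = w 0 := by
  simp [th]

lemma coeff_th_one (w : ℤ → ℤ) : coeff 1 (th w 1) = w (-1) + w 1 := by
  simp [th, show Finset.Icc (-1:ℤ) 1 = {-1,0,1} by rfl]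

lemma coeff_th_one' (w : ℤ → ℤ) : coeff 1 (th w 3) = 0 := by
  simp [th, show Finset.Icc (-1:ℤ) 1 = {-1,0,1} by rfl]

lemma EE_th (w : ℤ → ℤ) (j k : ℕ) [NeZero j] (hk : 0 < k) : EE j (th w k) = th w (j * k) := by
  have hj : 0 < j := NeZero.pos j
  ext n
  by_cases h : j ∣ n
  · obtain ⟨m, rfl⟩ := h
    rw [EE, coeff_expand_mul, coeff_th w hk (show m ≤ j * m by nlinarith),
      coeff_th w (Nat.mul_pos hj hk) le_rfl]
    refine Finset.sum_congr rfl fun a _ => ?_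
    have : ((j:ℤ) * k * a ^ 2 = j * m) ↔ (k:ℤ) * a ^ 2 = m := by
      rw [mul_assoc, mul_right_inj' (by exact_mod_cast hj.ne')]
    push_cast
    simp only [this]
  · rw [EE, coeff_expand_of_not_dvd _ _ _ h, th, coeff_mk, Finset.sum_eq_zero]
    intro a _
    rw [if_neg]
    intro h2
    apply h
    have : (j:ℤ) ∣ n := ⟨k * a ^ 2, by rw [← h2]; push_cast; ring⟩
    exact_mod_cast this

lemma th_dvd (w : ℤ → ℤ) (d k : ℕ) (hd : 0 < d) (hk : 0 < k) :
    th (fun m => if (d:ℤ) ∣ m then w m else 0) k = th (fun j => w (d * j)) (k * d ^ 2) := by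
  ext n
  simp only [th, coeff_mk]
  rw [← Finset.sum_filter, ← Finset.sum_filter, ← Finset.sum_filter]
  symm
  apply Finset.sum_nbij' (fun j => (d:ℤ) * j) (fun m => m / d)
  · intro j
    simp only [Finset.mem_filter, Finset.mem_Icc]
    rintro ⟨_, h⟩
    have h1 : (k:ℤ) * (d * j) ^ 2 = n := by rw [← h]; push_cast; ring
    exact ⟨⟨sq_bd (by exact_mod_cast hk) (by positivity) h1.le, h1⟩, dvd_mul_right _ _⟩
  · intro m
    simp only [Finset.mem_filter, Finset.mem_Icc]
    rintro ⟨⟨_, h⟩, ⟨j, rfl⟩⟩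
    rw [Int.mul_ediv_cancel_left _ (by exact_mod_cast hd.ne')]
    have h1 : ((k * d ^ 2 : ℕ):ℤ) * j ^ 2 = n := by rw [← h]; push_cast; ring
    exact ⟨sq_bd (by exact_mod_cast (by positivity)) (by positivity) h1.le, h1⟩
  · intro j _
    exact Int.mul_ediv_cancel_left _ (by exact_mod_cast hd.ne')
  · intro m
    simp only [Finset.mem_filter, Finset.mem_Icc]
    rintro ⟨_, h⟩
    exact Int.mul_ediv_cancel' h
  · intro j _; rfl

def sg (m : ℤ) : ℤ := if Even m then 1 else -1
def od (m : ℤ) : ℤ := if Even m then 0 else 1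
def on (_ : ℤ) : ℤ := 1

lemma sum_rot (g : ℤ × ℤ → ℤ) (N : ℕ) :
    ∑ p ∈ Finset.Icc (-(N:ℤ)) N ×ˢ Finset.Icc (-(N:ℤ)) N,
      (if (2:ℤ) * p.1 ^ 2 + 2 * p.2 ^ 2 = N then g p else 0) =
    ∑ p ∈ Finset.Icc (-(N:ℤ)) N ×ˢ Finset.Icc (-(N:ℤ)) N,
      (if p.1 ^ 2 + p.2 ^ 2 = N ∧ Even (p.1 + p.2) then
        g ((p.1 + p.2) / 2, (p.1 - p.2) / 2) else 0) := by
  rw [← Finset.sum_filter, ← Finset.sum_filter]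
  apply Finset.sum_nbij' (fun p => (p.1 + p.2, p.1 - p.2))
    (fun p => ((p.1 + p.2) / 2, (p.1 - p.2) / 2))
  · rintro ⟨a, b⟩
    simp only [Finset.mem_filter, Finset.mem_product, Finset.mem_Icc]
    rintro ⟨_, h⟩
    have h1 : (a + b) ^ 2 + (a - b) ^ 2 = N := by rw [← h]; ring
    refine ⟨⟨?_, ?_⟩, h1, ⟨a, by ring⟩⟩
    · exact sq_bd (k := 1) one_pos (by positivity) (by nlinarith [sq_nonneg (a - b)])
    · exact sq_bd (k := 1) one_pos (by positivity) (by nlinarith [sq_nonneg (a + b)])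
  · rintro ⟨m, n⟩
    simp only [Finset.mem_filter, Finset.mem_product, Finset.mem_Icc]
    rintro ⟨_, h, ⟨c, hc⟩⟩
    obtain rfl : m = 2 * c - n := by omega
    rw [show (2 * c - n + n) / 2 = c by omega, show (2 * c - n - n) / 2 = c - n by omega]
    have h1 : (2:ℤ) * c ^ 2 + 2 * (c - n) ^ 2 = N := by rw [← h]; ring
    refine ⟨⟨?_, ?_⟩, h1⟩
    · exact sq_bd (k := 1) one_pos (by positivity) (by nlinarith [sq_nonneg (c - n), sq_nonneg c])
    · exact sq_bd (k := 1) one_pos (by positivity) (by nlinarith [sq_nonneg (c - n), sq_nonneg c])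
  · rintro ⟨a, b⟩ _
    ext <;> dsimp only <;> omega
  · rintro ⟨m, n⟩
    simp only [Finset.mem_filter, Finset.mem_product, Finset.mem_Icc]
    rintro ⟨_, h, ⟨c, hc⟩⟩
    ext <;> dsimp only <;> omega
  · rintro ⟨a, b⟩ _
    congr 1
    ext <;> dsimp only <;> omega

lemma lat1 : th on 1 * th sg 1 = th sg 2 ^ 2 := by
  ext N
  rw [pow_two, coeff_th_mul _ _ one_pos one_pos, coeff_th_mul _ _ two_pos two_pos]
  have := sum_rot (fun p => sg p.1 * sg p.2) N
  push_cast
  rw [this, ← sub_eq_zero, ← Finset.sum_sub_distrib]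
  apply Finset.sum_involution (fun p _ => (p.2, p.1))
  · rintro ⟨a, b⟩ _
    have hab : (1:ℤ) * b ^ 2 + 1 * a ^ 2 = 1 * a ^ 2 + 1 * b ^ 2 := by ring
    have hab' : b ^ 2 + a ^ 2 = a ^ 2 + b ^ 2 := by ring
    dsimp only
    rw [hab, hab', add_comm b a]
    by_cases h : a ^ 2 + b ^ 2 = N
    · by_cases h2 : Even (a + b)
      · obtain ⟨c, hc⟩ := h2
        obtain rfl : a = 2 * c - b := by omega
        rw [show (2 * c - b + b) / 2 = c by omega, show (2 * c - b - b) / 2 = c - b by omega,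
          show (b - (2 * c - b)) / 2 = b - c by omega]
        simp only [one_mul, h, sg, on, show Even (2 * c - b + b) by simp]
        by_cases hb : Even b <;> by_cases hc : Even c <;> simp [hb, hc, parity_simps]
      · simp only [one_mul, h, h2, sg, on]
        rw [Int.even_add] at h2
        by_cases hb : Even b <;> by_cases hc : Even a <;> simp [hb, hc] <;> tauto
    · simp [h]
  · rintro ⟨a, b⟩ _ h1 h2
    dsimp only at h1
    apply h1
    simp only [Prod.mk.injEq] at h2
    obtain ⟨rfl, _⟩ := h2
    rw [show (b + b) / 2 = b by omega, show (b - b) / 2 = 0 by omega]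
    simp [on, sg]
  · rintro ⟨a, b⟩ h
    simpa [and_comm] using h
  · rintro ⟨a, b⟩ _; rfl

lemma lat2 : th on 1 ^ 2 + th sg 1 ^ 2 = 2 * th on 2 ^ 2 := by
  ext N
  rw [two_mul (th on 2 ^ 2), pow_two (th on 1), pow_two (th sg 1), pow_two (th on 2)]
  simp only [map_add, coeff_th_mul _ _ one_pos one_pos, coeff_th_mul _ _ two_pos two_pos]
  have := sum_rot (fun p => on p.1 * on p.2) N
  push_cast
  rw [this, ← Finset.sum_add_distrib, ← Finset.sum_add_distrib]
  apply Finset.sum_congr rfl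
  rintro ⟨a, b⟩ _
  simp only [one_mul]
  by_cases h : a ^ 2 + b ^ 2 = N
  · simp only [h, sg, on, Int.even_add]
    by_cases hb : Even b <;> by_cases hc : Even a <;> simp [hb, hc]
  · simp [h]

lemma sum_rot3 (N : ℕ) (e : ℤ) (he : e = 1 ∨ e = -1) :
    ∑ p ∈ Finset.Icc (-(N:ℤ)) N ×ˢ Finset.Icc (-(N:ℤ)) N,
      (if (4:ℤ) * p.1 ^ 2 + 12 * p.2 ^ 2 = N ∧ ¬ Even (p.1 + p.2) then (1:ℤ) else 0) =
    ∑ p ∈ Finset.Icc (-(N:ℤ)) N ×ˢ Finset.Icc (-(N:ℤ)) N,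
      (if p.1 ^ 2 + 3 * p.2 ^ 2 = N ∧ ¬ Even p.1 ∧ 4 ∣ p.1 - e * p.2 then 1 else 0) := by
  rw [← Finset.sum_filter, ← Finset.sum_filter]
  have he2 : e * e = 1 := by rcases he with rfl | rfl <;> rfl
  apply Finset.sum_nbij' (fun p => (p.1 + 3 * p.2, e * (p.1 - p.2)))
    (fun p => ((p.1 + 3 * (e * p.2)) / 4, (p.1 - e * p.2) / 4))
  · rintro ⟨a, b⟩
    simp only [Finset.mem_filter, Finset.mem_product, Finset.mem_Icc]
    rintro ⟨_, h, h'⟩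
    have h1 : (a + 3 * b) ^ 2 + 3 * (e * (a - b)) ^ 2 = N := by
      rw [← h]; linear_combination (3 * (a - b) ^ 2) * he2
    refine ⟨⟨?_, ?_⟩, h1, ?_, ?_⟩
    · exact sq_bd (k := 1) one_pos (by positivity) (by nlinarith [sq_nonneg (e * (a - b))])
    · exact sq_bd (k := 1) one_pos (by positivity)
        (by nlinarith [sq_nonneg (a + 3 * b), sq_nonneg (e * (a - b))])
    · rw [Int.even_iff] at *; omega
    · exact ⟨b, by linear_combination (-(a - b)) * he2⟩
  · rintro ⟨m, n⟩
    simp only [Finset.mem_filter, Finset.mem_product, Finset.mem_Icc]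
    rintro ⟨_, h, h', ⟨b, hb⟩⟩
    obtain rfl : m = 4 * b + e * n := by omega
    rw [show (4 * b + e * n + 3 * (e * n)) / 4 = b + e * n by omega,
      show (4 * b + e * n - e * n) / 4 = b by omega]
    have h1 : (4:ℤ) * (b + e * n) ^ 2 + 12 * b ^ 2 = N := by
      rw [← h]; linear_combination (3 * n ^ 2) * he2
    refine ⟨⟨?_, ?_⟩, h1, ?_⟩
    · exact sq_bd (k := 1) one_pos (by positivity)
        (by nlinarith [sq_nonneg (b + e * n), sq_nonneg b])
    · exact sq_bd (k := 1) one_pos (by positivity)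
        (by nlinarith [sq_nonneg (b + e * n), sq_nonneg b])
    · rw [Int.even_iff] at *; omega
  · rintro ⟨a, b⟩ _
    have : e * (e * (a - b)) = a - b := by rw [← mul_assoc, he2, one_mul]
    ext <;> dsimp only <;> rw [this] <;> omega
  · rintro ⟨m, n⟩
    simp only [Finset.mem_filter, Finset.mem_product, Finset.mem_Icc]
    rintro ⟨_, h, h', ⟨b, hb⟩⟩
    obtain rfl : m = 4 * b + e * n := by omega
    rw [show (4 * b + e * n + 3 * (e * n)) / 4 = b + e * n by omega,
      show (4 * b + e * n - e * n) / 4 = b by omega]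
    ext
    · dsimp only; ring
    · dsimp only; linear_combination n * he2
  · rintro ⟨a, b⟩ _
    rfl

lemma lat3 : th on 4 * th on 12 - th sg 4 * th sg 12 = th od 1 * th od 3 := by
  ext N
  simp only [map_sub, coeff_th_mul _ _ (show 0 < 4 by norm_num) (show 0 < 12 by norm_num),
    coeff_th_mul _ _ (show 0 < 1 by norm_num) (show 0 < 3 by norm_num)]
  have h1 := sum_rot3 N 1 (Or.inl rfl)
  have h2 := sum_rot3 N (-1) (Or.inr rfl)
  push_cast
  rw [← Finset.sum_sub_distrib]
  trans (∑ p ∈ Finset.Icc (-(N:ℤ)) N ×ˢ Finset.Icc (-(N:ℤ)) N,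
      (if (4:ℤ) * p.1 ^ 2 + 12 * p.2 ^ 2 = N ∧ ¬ Even (p.1 + p.2) then (1:ℤ) else 0)) +
      ∑ p ∈ Finset.Icc (-(N:ℤ)) N ×ˢ Finset.Icc (-(N:ℤ)) N,
      (if (4:ℤ) * p.1 ^ 2 + 12 * p.2 ^ 2 = N ∧ ¬ Even (p.1 + p.2) then (1:ℤ) else 0)
  · rw [← Finset.sum_add_distrib]
    apply Finset.sum_congr rfl
    rintro ⟨a, b⟩ _
    by_cases h : (4:ℤ) * a ^ 2 + 12 * b ^ 2 = N
    · simp only [h, sg, on, Int.even_add]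
      by_cases hb : Even b <;> by_cases hc : Even a <;> simp [hb, hc]
    · simp [h]
  · conv_lhs => rw [h1]
    conv_lhs => rw [← h1, h2]
    conv_lhs => lhs; rw [← h2, h1]
    rw [← Finset.sum_add_distrib]
    apply Finset.sum_congr rfl
    rintro ⟨a, b⟩ _
    simp only [one_mul]
    by_cases h : a ^ 2 + 3 * b ^ 2 = N
    · simp only [h, od]
      by_cases ha : Even a
      · simp [ha]
      · by_cases hb : Even b
        · have : ¬ (4:ℤ) ∣ a - b := by rw [Int.even_iff] at *; omega
          have h3 : ¬ (4:ℤ) ∣ a - (-1) * b := by rw [Int.even_iff] at *; omega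
          rw [if_neg (by tauto), if_neg (by tauto)]
          simp [hb]
        · rcases (show ((4:ℤ) ∣ a - b ∧ ¬ (4:ℤ) ∣ a - (-1) * b) ∨ (¬ (4:ℤ) ∣ a - b ∧ (4:ℤ) ∣ a - (-1) * b) by rw [Int.even_iff] at *; omega) with ⟨h3, h4⟩ | ⟨h3, h4⟩
          · rw [if_pos (by tauto), if_neg (by tauto)]
            simp [hb, ha]
          · rw [if_neg (by tauto), if_pos (by tauto)]
            simp [hb, ha]
    · simp [h]

end ThetaSec

noncomputable section AlgSec

def DD : Derivation ℤ (PowerSeries ℤ) (PowerSeries ℤ) := (X : PowerSeries ℤ) • (d⁄dX ℤ)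

lemma coeff_DD (f : PowerSeries ℤ) (n : ℕ) : coeff n (DD f) = n * coeff n f := by
  have : DD f = X * d⁄dX ℤ f := rfl
  rw [this]
  cases n with
  | zero => simp
  | succ n => rw [coeff_succ_X_mul, coeff_derivative]; push_cast; ring

lemma DD_EE (k : ℕ) [NeZero k] (f : PowerSeries ℤ) : DD (EE k f) = k * EE k (DD f) := by
  ext n
  have : (k : PowerSeries ℤ) = C (k:ℤ) := by simp
  rw [this, coeff_DD, coeff_C_mul]
  by_cases h : k ∣ n
  · obtain ⟨m, rfl⟩ := h
    rw [EE, coeff_expand_mul, coeff_expand_mul, coeff_DD]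
    push_cast; ring
  · rw [EE, coeff_expand_of_not_dvd _ _ _ h, coeff_expand_of_not_dvd _ _ _ h]; simp

lemma EE_inj (k : ℕ) [NeZero k] {f g : PowerSeries ℤ} (h : EE k f = EE k g) : f = g := by
  ext n
  have := congrArg (coeff (k * n)) h
  rwa [EE, coeff_expand_mul, coeff_expand_mul] at this

abbrev tx (k : ℕ) := th on k
abbrev ty (k : ℕ) := th sg k

lemma sg_zero : sg 0 = 1 := by simp [sg]
lemma sg_one : sg 1 = -1 := by simp [sg]
lemma sg_neg_one : sg (-1) = -1 := by simp [sg]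

lemma cc_tx (k : ℕ) : constantCoeff (tx k) = 1 := by
  rw [← coeff_zero_eq_constantCoeff_apply, coeff_th_zero]; rfl
lemma cc_ty (k : ℕ) : constantCoeff (ty k) = 1 := by
  rw [← coeff_zero_eq_constantCoeff_apply, coeff_th_zero]; rfl

lemma tx_ne (k : ℕ) : tx k ≠ 0 := by
  intro h; have := cc_tx k; rw [h] at this; simp at this
lemma ty_ne (k : ℕ) : ty k ≠ 0 := by
  intro h; have := cc_ty k; rw [h] at this; simp at this

/-- coefficient of X in a product -/
lemma c1_mul (f g : PowerSeries ℤ) : coeff 1 (f * g) =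
    coeff 1 f * constantCoeff g + constantCoeff f * coeff 1 g := by
  rw [coeff_mul]
  simp [Finset.Nat.antidiagonal_succ]
  ring

lemma c1_tx : coeff 1 (tx 1) = 2 := by rw [coeff_th_one]; rfl
lemma c1_ty : coeff 1 (ty 1) = -2 := by rw [coeff_th_one, sg_one, sg_neg_one]; rfl
lemma c1_tx3 : coeff 1 (tx 3) = 0 := coeff_th_one' _
lemma c1_ty3 : coeff 1 (ty 3) = 0 := coeff_th_one' _

/-- descent uniqueness -/
lemma descent (g s t : PowerSeries ℤ) (h : t * EE 2 g = s * g) (hs0 : constantCoeff s = 0)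
    (hs1 : coeff 1 s ≠ 0) (h0 : coeff 0 g = 0) (h1 : coeff 1 g = 0) : g = 0 := by
  obtain ⟨s', rfl⟩ := X_dvd_iff.2 hs0
  have hs' : constantCoeff s' ≠ 0 := by
    have : coeff (0+1) (X * s') = coeff 0 s' := coeff_succ_X_mul 0 s'
    simpa [this] using hs1
  have key : ∀ d : ℕ, X ^ (d + 2) ∣ g := by
    intro d
    induction d with
    | zero =>
      rw [X_pow_dvd_iff]
      intro m hm
      interval_cases m <;> assumption
    | succ d ih =>
      obtain ⟨g', rfl⟩ := ih
      rw [map_mul, map_pow, EE, expand_X] at h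
      have h2 : X ^ (d + 3) * (X ^ (d+1) * (t * expand 2 (NeZero.ne 2) g')) = X ^ (d+3) * (s' * g') := by
        linear_combination h
      have h3 := mul_left_cancel₀ (pow_ne_zero _ X_ne_zero) h2
      have h4 : constantCoeff (s' * g') = 0 := by rw [← h3]; simp
      rw [map_mul] at h4
      have h5 := (mul_eq_zero.1 h4).resolve_left hs'
      obtain ⟨g'', rfl⟩ := X_dvd_iff.2 h5
      exact ⟨g'', by ring⟩
  ext n
  rw [map_zero]
  exact (X_pow_dvd_iff.1 (key n)) n (by omega)

lemma E_tx (j k : ℕ) [NeZero j] (hk : 0 < k) : EE j (tx k) = tx (j * k) := EE_th _ _ _ hk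
lemma E_ty (j k : ℕ) [NeZero j] (hk : 0 < k) : EE j (ty k) = ty (j * k) := EE_th _ _ _ hk

lemma two_ne : (2 : PowerSeries ℤ) ≠ 0 := by
  intro h
  have h2 := congrArg (constantCoeff (R := ℤ)) h
  rw [map_ofNat, map_zero] at h2
  norm_num at h2

lemma three_ne : (3 : PowerSeries ℤ) ≠ 0 := by
  intro h
  have h2 := congrArg (constantCoeff (R := ℤ)) h
  rw [map_ofNat, map_zero] at h2
  norm_num at h2

lemma wronsk : 4 * (DD (tx 1) * ty 1 - tx 1 * DD (ty 1)) =
    tx 1 * ty 1 * (tx 1 ^ 4 - ty 1 ^ 4) := by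
  have l1 := lat1
  have l2 := lat2
  have ex : EE 2 (tx 1) = tx 2 := E_tx 2 1 one_pos
  have ey : EE 2 (ty 1) = ty 2 := E_ty 2 1 one_pos
  have dx : DD (tx 2) = 2 * EE 2 (DD (tx 1)) := by rw [← ex, DD_EE]; rfl
  have dy : DD (ty 2) = 2 * EE 2 (DD (ty 1)) := by rw [← ey, DD_EE]; rfl
  have d1 : tx 1 * DD (ty 1) + ty 1 * DD (tx 1) = 2 * ty 2 * DD (ty 2) := by
    have := congrArg DD l1
    simpa [Derivation.leibniz, pow_two, two_mul, add_mul] using this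
  have d2 : tx 1 * DD (tx 1) + ty 1 * DD (ty 1) = 2 * (tx 2 * DD (tx 2)) := by
    have h := congrArg DD l2
    rw [two_mul (th on 2 ^ 2)] at h
    simp only [map_add, pow_two, Derivation.leibniz, smul_eq_mul] at h
    apply mul_left_cancel₀ two_ne
    linear_combination h
  rw [← sub_eq_zero]
  apply descent _ (tx 1 ^ 2 - ty 1 ^ 2) (8 * (tx 2 * ty 2))
  · simp only [map_sub, map_mul, map_pow, ex, ey, map_ofNat]
    rw [dx] at d2
    rw [dy] at d1
    change tx 1 * ty 1 = ty 2 ^ 2 at l1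
    change tx 1 ^ 2 + ty 1 ^ 2 = 2 * tx 2 ^ 2 at l2
    generalize EE 2 (DD (tx 1)) = a at *
    generalize EE 2 (DD (ty 1)) = b at *
    generalize DD (tx 1) = c at *
    generalize DD (ty 1) = d at *
    generalize tx 1 = x at *
    generalize ty 1 = y at *
    generalize tx 2 = z at *
    generalize ty 2 = w at *
    have hz : 2 * z ^ 2 = x ^ 2 + y ^ 2 := l2.symm
    have e1 : 8 * (z * w) * (4 * (a * w - z * b)) = 4 * (x^2 - y^2) * (c * y - x * d) := by
      linear_combination (-8*w^2) * d2 + (-8 * (x * c + y * d)) * l1 + (8*z^2)*d1 + (4*(x*d+y*c)) * l2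
    have e2 : 8 * (z * w) * (z * w * (z^4 - w^4)) = (x^2-y^2) * (x * y * (x^4-y^4)) := by
      have hw : w ^ 4 = (x * y) ^ 2 := by rw [l1]; ring
      have h1 : 8 * (z * w) * (z * w * (z^4 - w^4)) = w^2 * ((2*z^2) * (2*z^2)^2 - 4 * (2 * z^2) * w^4) := by ring
      rw [h1, hw, hz, ← l1]; ring
    linear_combination e1 - e2
  · simp [cc_tx, cc_ty]
  · rw [pow_two, pow_two, map_sub, c1_mul, c1_mul, cc_tx, cc_ty, c1_tx, c1_ty]; norm_num
  · have d0 : ∀ f : PowerSeries ℤ, constantCoeff (DD f) = 0 := fun f => by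
      rw [← coeff_zero_eq_constantCoeff_apply, coeff_DD]; simp
    simp only [coeff_zero_eq_constantCoeff, map_sub, map_mul, map_pow, cc_tx, cc_ty, d0]
    norm_num
  · have h4 : (4 : PowerSeries ℤ) = C 4 := by simp
    have p4 : ∀ f : PowerSeries ℤ, f ^ 4 = f * (f * (f * f)) := fun f => by ring
    have d0 : ∀ f : PowerSeries ℤ, constantCoeff (DD f) = 0 := fun f => by
      rw [← coeff_zero_eq_constantCoeff_apply, coeff_DD]; simp
    simp only [h4, p4, map_sub, c1_mul, coeff_C_mul, map_mul, cc_tx, cc_ty, c1_tx, c1_ty, coeff_DD, d0]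
    norm_num

lemma wronsk3 : 4 * (DD (tx 3) * ty 3 - tx 3 * DD (ty 3)) =
    3 * (tx 3 * ty 3 * (tx 3 ^ 4 - ty 3 ^ 4)) := by
  have h := congrArg (EE 3) wronsk
  have ex : EE 3 (tx 1) = tx 3 := E_tx 3 1 one_pos
  have ey : EE 3 (ty 1) = ty 3 := E_ty 3 1 one_pos
  simp only [map_sub, map_mul, map_pow, ex, ey, map_ofNat] at h
  rw [← ex, ← ey, DD_EE, DD_EE, ex, ey]
  push_cast
  linear_combination 3 * h

lemma tx_split : tx 1 = tx 4 + th od 1 := by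
  have h := th_dvd on 2 1 two_pos one_pos
  have h2 : tx 4 = th (fun m => if ((2:ℕ):ℤ) ∣ m then on m else 0) 1 := by rw [h]; rfl
  rw [h2, ← th_add]
  change th on 1 = _
  congr 1
  funext m
  simp only [on, od, Nat.cast_ofNat, even_iff_two_dvd]
  split_ifs <;> rfl

lemma ty_split : ty 1 = tx 4 - th od 1 := by
  rw [eq_sub_iff_add_eq]
  have h := th_dvd on 2 1 two_pos one_pos
  have h2 : tx 4 = th (fun m => if ((2:ℕ):ℤ) ∣ m then on m else 0) 1 := by rw [h]; rfl
  rw [h2, ← th_add]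
  congr 1
  funext m
  simp only [on, sg, od, Nat.cast_ofNat, even_iff_two_dvd]
  split_ifs <;> rfl

lemma Qsq : tx 4 ^ 2 + th od 1 ^ 2 = tx 2 ^ 2 := by
  have := lat2
  apply mul_left_cancel₀ two_ne
  change tx 1 ^ 2 + ty 1 ^ 2 = 2 * tx 2 ^ 2 at this
  rw [tx_split, ty_split] at this
  linear_combination this

lemma lat1E (k : ℕ) [NeZero k] : tx k * ty k = ty (k * 2) ^ 2 := by
  have h := congrArg (EE k) lat1
  have ex : EE k (tx 1) = tx (k * 1) := E_tx k 1 one_pos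
  have ey : EE k (ty 1) = ty (k * 1) := E_ty k 1 one_pos
  have ez : EE k (ty 2) = ty (k * 2) := E_ty k 2 two_pos
  rw [mul_one] at ex ey
  rw [map_mul, map_pow] at h
  rwa [ex, ey, ez] at h

lemma Q4 : th od 1 ^ 4 = tx 4 ^ 4 - ty 4 ^ 4 := by
  have h1 := Qsq
  have h2 : tx 1 * ty 1 = ty 2 ^ 2 := lat1
  have h3 : tx 2 * ty 2 = ty 4 ^ 2 := lat1E 2
  rw [tx_split, ty_split] at h2
  have h4 : (tx 2 * ty 2) ^ 2 = ty 4 ^ 4 := by rw [h3]; ring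
  linear_combination -h4 - (tx 4 ^ 2 - th od 1 ^ 2) * h1 - tx 2 ^ 2 * h2

lemma mod_eq : (tx 1 * tx 3 - ty 1 * ty 3) ^ 4 = (tx 1 ^ 4 - ty 1 ^ 4) * (tx 3 ^ 4 - ty 3 ^ 4) := by
  apply EE_inj 4
  have ex : EE 4 (tx 1) = tx 4 := E_tx 4 1 one_pos
  have ey : EE 4 (ty 1) = ty 4 := E_ty 4 1 one_pos
  have eX : EE 4 (tx 3) = tx 12 := E_tx 4 3 (by norm_num)
  have eY : EE 4 (ty 3) = ty 12 := E_ty 4 3 (by norm_num)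
  simp only [map_sub, map_mul, map_pow, ex, ey, eX, eY]
  have h := congrArg (EE 3) Q4
  have ex' : EE 3 (tx 4) = tx 12 := E_tx 3 4 (by norm_num)
  have ey' : EE 3 (ty 4) = ty 12 := E_ty 3 4 (by norm_num)
  have eq' : EE 3 (th od 1) = th od 3 := EE_th _ 3 1 one_pos
  simp only [map_sub, map_pow, ex', ey', eq'] at h
  rw [← h, ← Q4, lat3]; ring

/-- Delta is nonzero -/
lemma c1_Delta : coeff 1 (tx 1 * tx 3 - ty 1 * ty 3) = 4 := by
  simp only [map_sub, c1_mul, cc_tx, cc_ty, c1_tx, c1_ty, c1_tx3, c1_ty3]; norm_num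

lemma Delta_ne : tx 1 * tx 3 - ty 1 * ty 3 ≠ 0 := by
  intro h
  have := c1_Delta
  rw [h] at this; simp at this

lemma multM : tx 1 * tx 3 * (ty 1 ^ 4 + 3 * ty 3 ^ 4) = ty 1 * ty 3 * (tx 1 ^ 4 + 3 * tx 3 ^ 4) := by
  have me := mod_eq
  have w1 := wronsk
  have w3 := wronsk3
  have hD := Delta_ne
  have hy := ty_ne 1
  have hZ := ty_ne 3
  have dme := congrArg DD me
  have p4 : ∀ f : PowerSeries ℤ, DD (f ^ 4) = 4 * f ^ 3 * DD f := fun f => by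
    rw [Derivation.leibniz_pow]; simp [nsmul_eq_mul]; ring
  simp only [p4, Derivation.leibniz, map_sub, smul_eq_mul] at dme
  generalize DD (tx 1) = dx at *
  generalize DD (ty 1) = dy at *
  generalize DD (tx 3) = dX at *
  generalize DD (ty 3) = dZ at *
  generalize tx 1 = x at *
  generalize ty 1 = y at *
  generalize tx 3 = X at *
  generalize ty 3 = Z at *
  have hab : (x ^ 4 - y ^ 4) * (X ^ 4 - Z ^ 4) ≠ 0 := by rw [← me]; exact pow_ne_zero _ hD
  set Δ := x * X - y * Z with hΔ
  set a := x ^ 4 - y ^ 4 with ha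
  set b := X ^ 4 - Z ^ 4 with hb
  have e1 : 4 * (a * b) * (X * Z * (dx * y - x * dy) + x * y * (dX * Z - X * dZ)) =
      4 * Δ * (b * Z * x ^ 3 * (dx * y - x * dy) + a * y * X ^ 3 * (dX * Z - X * dZ)) := by
    have e0 : y * Z * (4 * (a * b) * (x * dX + X * dx - (y * dZ + Z * dy))) =
      y * Z * (Δ * (a * (4 * X ^ 3 * dX - 4 * Z ^ 3 * dZ) + b * (4 * x ^ 3 * dx - 4 * y ^ 3 * dy))) := by
      rw [← dme, ← me]; ring
    rw [ha, hb, hΔ] at *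
    linear_combination e0
  have e2 : (a * b) * (y * Z) * (x * X * (y ^ 4 + 3 * Z ^ 4)) = (a * b) * (y * Z) * (y * Z * (x ^ 4 + 3 * X ^ 4)) := by
    have e3 : (a * b) * (y * Z) * (x * X * (a + 3 * b)) = (a * b) * (y * Z) * (Δ * (x ^ 4 + 3 * X ^ 4)) := by
      linear_combination e1 - (a * b * X * Z - Δ * b * Z * x ^ 3) * w1 - (a * b * x * y - Δ * a * y * X ^ 3) * w3
    rw [ha, hb, hΔ] at *
    linear_combination -e3
  exact mul_left_cancel₀ (mul_ne_zero hab (mul_ne_zero hy hZ)) e2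

lemma rel1 : tx 1 ^ 3 * ty 3 - tx 3 * ty 1 ^ 3 =
    3 * tx 3 * ty 3 * (tx 1 * tx 3 - ty 1 * ty 3) := by
  have me := mod_eq
  have M := multM
  have hx := tx_ne 1
  have hy := ty_ne 1
  have hsq : (tx 1 ^ 3 * ty 3 - tx 3 * ty 1 ^ 3) ^ 2 =
    (3 * tx 3 * ty 3 * (tx 1 * tx 3 - ty 1 * ty 3)) ^ 2 := by
    apply mul_left_cancel₀ (mul_ne_zero hx hy)
    generalize tx 1 = x at *
    generalize ty 1 = y at *
    generalize tx 3 = X at *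
    generalize ty 3 = Z at *
    linear_combination (3 * X * Z) * me - (x ^ 3 * Z - X * y ^ 3) * M
  rcases sq_eq_sq_iff_eq_or_eq_neg.1 hsq with h | h
  · exact h
  · exfalso
    have h1 := congrArg (coeff 1) h
    have h3 : (3 : PowerSeries ℤ) = C 3 := by simp
    have p3 : ∀ f : PowerSeries ℤ, f ^ 3 = f * (f * f) := fun f => by ring
    simp only [h3, p3, mul_assoc, map_sub, map_neg, c1_mul, coeff_C_mul, map_mul, cc_tx, cc_ty, c1_tx, c1_ty, c1_tx3, c1_ty3] at h1
    norm_num at h1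

lemma rel2 : 4 * ty 1 * ty 3 * (tx 1 ^ 4 - ty 1 ^ 4) =
    (tx 1 * tx 3 - ty 1 * ty 3) * (ty 1 ^ 2 + 3 * ty 3 ^ 2) ^ 2 := by
  have me := mod_eq
  have l := rel1
  have hD := Delta_ne
  have hX := tx_ne 3
  have hZ := ty_ne 3
  generalize tx 1 = x at *
  generalize ty 1 = y at *
  generalize tx 3 = X at *
  generalize ty 3 = Z at *
  have h3 : (3 * X * Z * (x * X - y * Z)) ≠ 0 :=
    mul_ne_zero (mul_ne_zero (mul_ne_zero three_ne hX) hZ) hD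
  apply mul_left_cancel₀ (pow_ne_zero 2 h3)
  have k1 : 3 * X * Z * (x * X - y * Z) * (y ^ 2 + 3 * Z ^ 2) =
      3 * Z * (x * X ^ 2 * y ^ 2 + x ^ 3 * Z ^ 2 - 2 * X * y ^ 3 * Z) := by
    linear_combination (-3 * Z ^ 2) * l
  have k2 : (x * X ^ 2 * y ^ 2 + x ^ 3 * Z ^ 2 - 2 * X * y ^ 3 * Z) ^ 2 =
      4 * X ^ 2 * y * Z * (x * X - y * Z) * (x ^ 4 - y ^ 4) := by
    linear_combination x ^ 2 * me
  have k3 : (3 * X * Z * (x * X - y * Z)) ^ 2 * ((x * X - y * Z) * (y ^ 2 + 3 * Z ^ 2) ^ 2) =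
      (x * X - y * Z) * (3 * X * Z * (x * X - y * Z) * (y ^ 2 + 3 * Z ^ 2)) ^ 2 := by ring
  rw [k3, k1]
  linear_combination (-9 * Z ^ 2 * (x * X - y * Z)) * k2

end AlgSec

section GaussSec

lemma gauss_fin (q : PowerSeries ℤ) (T : ℕ → PowerSeries ℤ) (h0 : T 0 = 1)
    (hT : ∀ n, T (n+1) = T n + 2 * (-1) ^ (n+1) * q ^ ((n+1)^2)) (n : ℕ) :
    T n * ∏ k ∈ range n, (1 + q ^ (k+1)) = ∏ k ∈ range n, (1 - q ^ (k+1)) +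
      2 * ∑ i ∈ range n, (-1) ^ (i+1) * (q ^ ((i+1) * (n+1)) *
        (∏ k ∈ Finset.Ico (i+1) n, (1 - q ^ (k+1))) * ∏ k ∈ range i, (1 + q ^ (k+1))) := by
  induction n with
  | zero => simp [h0]
  | succ n ih =>
    set U : ℕ → PowerSeries ℤ := fun i => q ^ ((i+1) * (n+1)) *
        (∏ k ∈ Finset.Ico i n, (1 - q ^ (k+1))) * ∏ k ∈ range i, (1 + q ^ (k+1)) with hU
    have tele : ∀ m, ∑ i ∈ range m, (-1) ^ i * (U i + U (i+1)) = U 0 - (-1) ^ m * U m := by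
      intro m
      induction m with
      | zero => simp
      | succ m ihm => rw [Finset.sum_range_succ, ihm, pow_succ]; ring
    have step : ∀ i ∈ range n, (-1) ^ (i+1) * (q ^ ((i+1) * (n+1+1)) *
        (∏ k ∈ Finset.Ico (i+1) (n+1), (1 - q ^ (k+1))) * ∏ k ∈ range i, (1 + q ^ (k+1))) =
        (1 + q ^ (n+1)) * ((-1) ^ (i+1) * (q ^ ((i+1) * (n+1)) *
        (∏ k ∈ Finset.Ico (i+1) n, (1 - q ^ (k+1))) * ∏ k ∈ range i, (1 + q ^ (k+1)))) +
        (-1) ^ i * (U i + U (i+1)) := by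
      intro i hi
      rw [Finset.mem_range] at hi
      simp only [hU]
      rw [Finset.prod_Ico_succ_top (by omega), Finset.prod_eq_prod_Ico_succ_bot hi,
        Finset.prod_range_succ (fun k => 1 + q ^ (k+1)) i]
      have e1 : q ^ ((i+1) * (n+1+1)) = q ^ ((i+1) * (n+1)) * q ^ (i+1) := by rw [← pow_add]; ring_nf
      have e2 : q ^ ((i+1+1) * (n+1)) = q ^ ((i+1) * (n+1)) * q ^ (n+1) := by rw [← pow_add]; ring_nf
      rw [e1, e2, pow_succ (-1 : PowerSeries ℤ) i]
      ring
    rw [Finset.sum_range_succ, Finset.sum_congr rfl step, Finset.sum_add_distrib, ← Finset.mul_sum, tele,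
      Finset.prod_range_succ, Finset.prod_range_succ, hT]
    have u0 : U 0 = q ^ (n+1) * ∏ k ∈ range n, (1 - q ^ (k+1)) := by
      simp [hU]
    have un : U n = q ^ ((n+1)^2) * ∏ k ∈ range n, (1 + q ^ (k+1)) := by
      simp [hU, pow_two]
    rw [u0, un]
    have e1 : q ^ ((n+1) * (n+1+1)) = q ^ ((n+1)^2) * q ^ (n+1) := by rw [← pow_add]; ring_nf
    rw [e1, Finset.Ico_self, Finset.prod_empty, pow_succ (-1 : PowerSeries ℤ) n]
    linear_combination (1 + q ^ (n+1)) * ih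

noncomputable def TT (n : ℕ) : PowerSeries ℤ :=
  ∑ m ∈ Finset.Icc (-(n:ℤ)) n, C (sg m) * X ^ (m.natAbs ^ 2)

lemma sg_nat (n : ℕ) : sg n = (-1) ^ n := by
  unfold sg
  by_cases h : Even n
  · rw [if_pos (by exact_mod_cast h), h.neg_one_pow]
  · rw [if_neg (by exact_mod_cast h), (Nat.not_even_iff_odd.1 h).neg_one_pow]

lemma sg_neg (m : ℤ) : sg (-m) = sg m := by simp [sg]

lemma TT_succ (n : ℕ) : TT (n+1) = TT n + 2 * (-1) ^ (n+1) * X ^ ((n+1)^2) := by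
  unfold TT
  have : Finset.Icc (-((n+1:ℕ):ℤ)) ((n+1:ℕ):ℤ) =
      insert ((n+1:ℕ):ℤ) (insert (-((n+1:ℕ):ℤ)) (Finset.Icc (-(n:ℤ)) n)) := by
    ext m; simp only [Finset.mem_Icc, Finset.mem_insert]; omega
  rw [this, Finset.sum_insert, Finset.sum_insert, sg_neg, sg_nat, Int.natAbs_neg, Int.natAbs_natCast]
  · simp only [map_pow, map_neg, map_one]; ring
  · simp only [Finset.mem_Icc]; omega
  · simp only [Finset.mem_Icc, Finset.mem_insert]; omega

lemma coeff_TT {n N : ℕ} (h : N ≤ n) : coeff N (TT n) = coeff N (ty 1) := by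
  rw [coeff_th _ one_pos h, TT, map_sum]
  refine Finset.sum_congr rfl fun m _ => ?_
  rw [coeff_C_mul, coeff_X_pow]
  have : (((1:ℕ):ℤ) * m ^ 2 = N) ↔ N = m.natAbs ^ 2 := by
    rw [← Int.natAbs_sq]; push_cast; constructor
    · intro h; zify; rw [← h]; simp
    · intro h; rw [h]; push_cast; simp
  simp only [this]
  split_ifs <;> simp

open PowerSeries.WithPiTopology in
lemma gauss_lim (F G : PowerSeries ℤ) (hF : HasProd (fun i : ℕ => (1 + X ^ (i+1) : PowerSeries ℤ)) F)
    (hG : HasProd (fun i : ℕ => (1 - X ^ (i+1) : PowerSeries ℤ)) G) : ty 1 * F = G := by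
  have hT : Filter.Tendsto TT Filter.atTop (nhds (ty 1)) := by
    rw [tendsto_iff_coeff_tendsto]
    intro d
    apply tendsto_atTop_of_eventually_const (i₀ := d)
    intro i hi
    exact coeff_TT hi
  have h1 := hT.mul hF.tendsto_prod_nat
  have h2 := hG.tendsto_prod_nat
  have h3 : Filter.Tendsto (fun n => TT n * ∏ k ∈ range n, (1 + X ^ (k+1)) - ∏ k ∈ range n, (1 - X ^ (k+1) : PowerSeries ℤ))
      Filter.atTop (nhds 0) := by
    rw [tendsto_iff_coeff_tendsto]
    intro d
    apply tendsto_atTop_of_eventually_const (i₀ := d)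
    intro n hn
    have := gauss_fin X TT (by simp [TT, sg]) TT_succ n
    rw [this, add_sub_cancel_left, map_zero]
    have hd : (X : PowerSeries ℤ) ^ (n+1) ∣ 2 * ∑ i ∈ range n, (-1) ^ (i+1) * (X ^ ((i+1) * (n+1)) *
        (∏ k ∈ Finset.Ico (i+1) n, (1 - X ^ (k+1))) * ∏ k ∈ range i, (1 + X ^ (k+1))) := by
      apply Dvd.dvd.mul_left
      apply Finset.dvd_sum
      intro i _
      apply Dvd.dvd.mul_left
      apply Dvd.dvd.mul_right
      apply Dvd.dvd.mul_right
      exact pow_dvd_pow _ (by nlinarith)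
    exact X_pow_dvd_iff.1 hd d (by omega)
  have h4 := tendsto_nhds_unique (h1.sub h2) h3
  exact sub_eq_zero.1 h4

end GaussSec

section GFSec
open PowerSeries.WithPiTopology

lemma hasProd_EE (k : ℕ) [NeZero k] {f : ℕ → PowerSeries ℤ} {a : PowerSeries ℤ} (h : HasProd f a) :
    HasProd (fun i => EE k (f i)) (EE k a) := by
  rw [HasProd, tendsto_iff_coeff_tendsto] at *
  intro d
  simp only [← map_prod, EE, coeff_expand]
  split_ifs
  · exact h _
  · exact tendsto_const_nhds

lemma hasProd_dvd (k : ℕ) [NeZero k] (e : ℤ) {a : PowerSeries ℤ}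
    (h : HasProd (fun i : ℕ => (1 + C e * X ^ (i+1) : PowerSeries ℤ)) a) :
    HasProd (fun i : ℕ => if k ∣ i + 1 then (1 + C e * X ^ (i+1) : PowerSeries ℤ) else 1) (EE k a) := by
  have hk : 0 < k := NeZero.pos k
  have h1 := hasProd_EE k h
  have inj : Function.Injective (fun i : ℕ => k * (i+1) - 1) := by
    intro a b hab
    dsimp only at hab
    have ha : 0 < k * (a+1) := by positivity
    have hb : 0 < k * (b+1) := by positivity
    have : k * (a+1) = k * (b+1) := by omega
    have := Nat.eq_of_mul_eq_mul_left hk this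
    omega
  rw [← inj.hasProd_iff]
  · convert! h1 using 2 with i
    have ha : 0 < k * (i+1) := by positivity
    rw [Function.comp, Nat.sub_add_cancel ha, if_pos (dvd_mul_right _ _)]
    simp [EE, ← pow_mul]
  · intro x hx
    rw [if_neg]
    rintro ⟨c, hc⟩
    apply hx
    refine ⟨c - 1, ?_⟩
    have : c ≠ 0 := by rintro rfl; simp at hc
    dsimp only
    rw [Nat.sub_add_cancel (by omega), ← hc]; simp

lemma exists_prod (e : ℤ) (p : ℕ → Prop) [DecidablePred p] :
    ∃ a : PowerSeries ℤ, HasProd (fun i : ℕ => if p (i + 1) then (1 + C e * X ^ (i+1) : PowerSeries ℤ) else 1) a := by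
  have := Nat.Partition.hasProd_genFun (R := ℤ) (fun i c => if c = 1 ∧ p i then e else 0)
  refine ⟨Nat.Partition.genFun (R := ℤ) (fun i c => if c = 1 ∧ p i then e else 0), ?_⟩
  · convert! this using 2 with i
    rw [tsum_eq_single 0]
    · split_ifs <;> simp_all [smul_eq_C_mul]
    · intro j hj; simp [hj, smul_eq_C_mul]

lemma cc_hasProd {f : ℕ → PowerSeries ℤ} {a : PowerSeries ℤ} (h : HasProd f a)
    (hf : ∀ i, constantCoeff (f i) = 1) : a ≠ 0 := by
  have h1 := h.map (constantCoeff (R := ℤ)) (continuous_constantCoeff ℤ)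
  have h2 : (⇑(constantCoeff (R := ℤ)) ∘ f) = fun _ => 1 := by funext i; exact hf i
  rw [h2] at h1
  have h3 := h1.unique hasProd_one
  rintro rfl
  simp at h3

def pp (i : ℕ) : Prop := ¬ 4 ∣ i ∧ ¬ 9 ∣ i
instance : DecidablePred pp := fun i => by unfold pp; infer_instance

lemma hasProd_A : HasProd (fun i : ℕ ↦ if pp (i + 1) then ∑' j : ℕ, (X : PowerSeries ℤ) ^ ((i + 1) * j) else 1)
    (PowerSeries.mk fun n ↦ (regularCount 4 9 n : ℤ)) := by
  convert! Nat.Partition.hasProd_powerSeriesMk_card_restricted ℤ pp using 4 with n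
  rw [regularCount, Fintype.card_subtype, Nat.Partition.restricted]
  rfl

lemma hasProd_B : HasProd (fun i : ℕ ↦ if pp (i + 1) then (1 + C 1 * X ^ (i + 1) : PowerSeries ℤ) else 1)
    (PowerSeries.mk fun n ↦ (regularDistinctCount 4 9 n : ℤ)) := by
  convert! Nat.Partition.hasProd_genFun (R := ℤ) (fun i c => if c < 2 ∧ pp i then 1 else 0) using 1
  · ext1 i
    rw [tsum_eq_single 0]
    · split_ifs <;> simp_all [smul_eq_C_mul]
    · intro j hj
      rw [if_neg (by omega), smul_eq_C_mul]; simp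
  · simp_rw [Nat.Partition.genFun, Finsupp.prod, Finset.prod_boole]
    ext n
    rw [coeff_mk, coeff_mk, Finset.sum_boole, regularDistinctCount, Fintype.card_subtype]
    congr 2
    ext x
    simp only [Finset.mem_filter, Finset.mem_univ, true_and, Multiset.toFinsupp_support, Multiset.toFinsupp_apply,
      Multiset.mem_toFinset, Multiset.nodup_iff_count_le_one, pp]
    constructor
    · rintro ⟨h1, h2⟩ i hi
      exact ⟨by have := h1 i; omega, h2 i hi⟩
    · intro h
      refine ⟨fun i => ?_, fun i hi => (h i hi).2⟩
      by_cases hi : i ∈ x.parts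
      · have := (h i hi).1; omega
      · rw [Multiset.count_eq_zero_of_notMem hi]; omega

noncomputable def GG : PowerSeries ℤ := PowerSeries.mk fun n => (Rbar 4 9 n : ℤ)

lemma GG_eq : GG = (PowerSeries.mk fun n ↦ (regularCount 4 9 n : ℤ)) *
    (PowerSeries.mk fun n ↦ (regularDistinctCount 4 9 n : ℤ)) := by
  ext n
  simp only [GG, coeff_mk, coeff_mul, Rbar]
  push_cast
  rfl

lemma four_rel (e : ℤ) {a1 ap a4 a9 a36 : PowerSeries ℤ}
    (h1 : HasProd (fun i : ℕ => (1 + C e * X ^ (i+1) : PowerSeries ℤ)) a1)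
    (hp : HasProd (fun i : ℕ => if pp (i+1) then (1 + C e * X ^ (i+1) : PowerSeries ℤ) else 1) ap)
    (h4 : HasProd (fun i : ℕ => if 4 ∣ i+1 then (1 + C e * X ^ (i+1) : PowerSeries ℤ) else 1) a4)
    (h9 : HasProd (fun i : ℕ => if 9 ∣ i+1 then (1 + C e * X ^ (i+1) : PowerSeries ℤ) else 1) a9)
    (h36 : HasProd (fun i : ℕ => if 36 ∣ i+1 then (1 + C e * X ^ (i+1) : PowerSeries ℤ) else 1) a36) :
    a1 * a36 = ap * (a4 * a9) := by
  refine (h1.mul h36).unique ?_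
  convert! hp.mul (h4.mul h9) using 2 with i
  unfold pp
  have : 36 ∣ i + 1 ↔ 4 ∣ i + 1 ∧ 9 ∣ i + 1 := by omega
  simp only [this]
  by_cases h4 : 4 ∣ i + 1 <;> by_cases h9 : 9 ∣ i + 1 <;> simp [h4, h9]

lemma GF : GG * ty 1 * ty 36 = ty 4 * ty 9 := by
  obtain ⟨p1, hp1⟩ := exists_prod 1 (fun _ => True)
  obtain ⟨m1, hm1⟩ := exists_prod (-1) (fun _ => True)
  obtain ⟨mp, hmp⟩ := exists_prod (-1) pp
  simp only [if_true] at hp1 hm1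
  have g1 : ty 1 * p1 = m1 := gauss_lim p1 m1 (by simpa using hp1) (by simpa [sub_eq_add_neg] using hm1)
  have gk : ∀ k : ℕ, ∀ _ : NeZero k, ty k * EE k p1 = EE k m1 := by
    intro k _
    rw [← g1, map_mul, E_ty k 1 one_pos, mul_one]
  have hB := hasProd_B
  have hA := hasProd_A
  have hAm : (PowerSeries.mk fun n ↦ (regularCount 4 9 n : ℤ)) * mp = 1 := by
    refine (hA.mul hmp).unique ?_
    convert! hasProd_one using 2 with i
    split_ifs
    · have := WithPiTopology.tsum_pow_mul_one_sub_of_constantCoeff_eq_zero (f := (X : PowerSeries ℤ) ^ (i+1)) (by simp)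
      simp only [pow_mul, map_neg, map_one]
      linear_combination this
    · simp
  have rp := four_rel 1 hp1 hB (hasProd_dvd 4 1 hp1) (hasProd_dvd 9 1 hp1) (hasProd_dvd 36 1 hp1)
  have rm := four_rel (-1) hm1 hmp (hasProd_dvd 4 _ hm1) (hasProd_dvd 9 _ hm1) (hasProd_dvd 36 _ hm1)
  rw [GG_eq]
  have n1 : p1 ≠ 0 := cc_hasProd hp1 (by simp)
  have n36 : EE 36 p1 ≠ 0 := cc_hasProd (hasProd_dvd 36 1 hp1) (by intro i; split_ifs <;> simp)
  rw [← gk 36 inferInstance, ← gk 4 inferInstance, ← gk 9 inferInstance, ← g1] at rm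
  generalize (PowerSeries.mk fun n ↦ (regularCount 4 9 n : ℤ)) = A at *
  generalize (PowerSeries.mk fun n ↦ (regularDistinctCount 4 9 n : ℤ)) = B at *
  apply mul_right_cancel₀ (mul_ne_zero n1 n36)
  linear_combination A * B * rm + (B * ty 4 * ty 9 * EE 4 p1 * EE 9 p1) * hAm - ty 4 * ty 9 * rp

end GFSec

noncomputable section USec

variable {R : Type} [CommRing R]

def UU (d r : ℕ) : PowerSeries R →+ PowerSeries R where
  toFun f := PowerSeries.mk fun n => coeff (d * n + r) f
  map_zero' := by ext; simp
  map_add' f g := by ext; simp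

lemma coeff_UU (d r n : ℕ) (f : PowerSeries R) : coeff n (UU d r f) = coeff (d * n + r) f := by
  simp [UU]

lemma UU_mul (d r : ℕ) [NeZero d] (hr : r < d) (f g : PowerSeries R) :
    UU d r (f * EE d g) = UU d r f * g := by
  have hd : 0 < d := NeZero.pos d
  ext n
  rw [coeff_UU, coeff_mul, coeff_mul]
  symm
  apply Finset.sum_of_injOn (fun p : ℕ × ℕ => (d * p.1 + r, d * p.2))
  · rintro ⟨a, b⟩ _ ⟨a', b'⟩ _ h
    simp only [Prod.mk.injEq] at h
    have h1 : d * a = d * a' := by omega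
    ext
    · exact Nat.eq_of_mul_eq_mul_left hd h1
    · exact Nat.eq_of_mul_eq_mul_left hd h.2
  · rintro ⟨a, b⟩ h
    simp only [Finset.mem_coe, Finset.HasAntidiagonal.mem_antidiagonal] at h ⊢
    rw [← h]; ring
  · rintro ⟨a, b⟩ h1 h2
    rw [Finset.HasAntidiagonal.mem_antidiagonal] at h1
    dsimp only at h1 ⊢
    by_cases hb : d ∣ b
    · exfalso
      obtain ⟨c, rfl⟩ := hb
      apply h2
      have hc : c ≤ n := by
        by_contra hc
        have : d * (n + 1) ≤ d * c := Nat.mul_le_mul_left _ (by omega)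
        rw [mul_add] at this
        omega
      refine ⟨(n - c, c), ?_, ?_⟩
      · simp only [Finset.mem_coe, Finset.HasAntidiagonal.mem_antidiagonal]; omega
      · have : d * (n - c) + d * c = d * n := by rw [← mul_add]; congr 1; omega
        ext <;> dsimp only
        omega
    · rw [coeff_expand_of_not_dvd _ _ _ hb, mul_zero]
  · rintro ⟨a, b⟩ _
    rw [coeff_UU, coeff_expand_mul]

def Sp (d r : ℕ) (f : PowerSeries R) : Prop := ∀ n, coeff n f ≠ 0 → n % d = r % d

lemma Sp.mul {d r s : ℕ} {f g : PowerSeries R} (hf : Sp d r f) (hg : Sp d s g) : Sp d (r + s) (f * g) := by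
  intro n hn
  rw [coeff_mul] at hn
  obtain ⟨p, hp, h⟩ := Finset.exists_ne_zero_of_sum_ne_zero hn
  rw [Finset.HasAntidiagonal.mem_antidiagonal] at hp
  have h1 := hf p.1 (left_ne_zero_of_mul h)
  have h2 := hg p.2 (right_ne_zero_of_mul h)
  rw [← hp, Nat.add_mod, h1, h2, ← Nat.add_mod]

lemma Sp.add {d r : ℕ} {f g : PowerSeries R} (hf : Sp d r f) (hg : Sp d r g) : Sp d r (f + g) := by
  intro n hn
  by_contra h
  apply hn
  rw [map_add, not_not.1 (mt (hf n) h), not_not.1 (mt (hg n) h), add_zero]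

lemma Sp.neg {d r : ℕ} {f : PowerSeries R} (hf : Sp d r f) : Sp d r (-f) := by
  intro n hn
  apply hf n
  simpa using hn

lemma Sp.sub {d r : ℕ} {f g : PowerSeries R} (hf : Sp d r f) (hg : Sp d r g) : Sp d r (f - g) := by
  rw [sub_eq_add_neg]; exact hf.add hg.neg

lemma Sp.congr {d r s : ℕ} {f : PowerSeries R} (hf : Sp d r f) (h : r % d = s % d) : Sp d s f := by
  intro n hn
  rw [hf n hn, h]

lemma Sp.one {d : ℕ} : Sp d 0 (1 : PowerSeries R) := by
  intro n hn
  rw [coeff_one] at hn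
  have : n = 0 := by by_contra h; simp [h] at hn
  rw [this]

lemma Sp.pow {d r : ℕ} {f : PowerSeries R} (hf : Sp d r f) (k : ℕ) : Sp d (k * r) (f ^ k) := by
  induction k with
  | zero => rw [zero_mul, pow_zero]; exact Sp.one
  | succ k ih => rw [pow_succ, add_mul, one_mul]; exact ih.mul hf

lemma Sp.EE {d : ℕ} [NeZero d] (f : PowerSeries R) : Sp d 0 (EE d f) := by
  intro n hn
  by_contra h
  apply hn
  apply coeff_expand_of_not_dvd
  intro h2
  apply h
  rw [Nat.mod_eq_zero_of_dvd h2]; simp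

lemma Sp.map {S : Type} [CommRing S] {d r : ℕ} {f : PowerSeries R} (hf : Sp d r f) (φ : R →+* S) :
    Sp d r (PowerSeries.map φ f) := by
  intro n hn
  apply hf
  intro h
  apply hn
  rw [coeff_map, h, map_zero]

lemma UU_zero {d r s : ℕ} {f : PowerSeries R} (hf : Sp d s f) (h : r % d ≠ s % d) : UU d r f = 0 := by
  ext n
  rw [coeff_UU, map_zero]
  by_contra hn
  apply h
  rw [← hf _ hn]; simp

lemma EE_UU {d r : ℕ} [NeZero d] {f : PowerSeries R} (hf : Sp d r f) (hr : r < d) :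
    X ^ r * EE d (UU d r f) = f := by
  ext n
  rw [coeff_X_pow_mul']
  split_ifs with h
  · by_cases h2 : d ∣ n - r
    · obtain ⟨c, hc⟩ := h2
      rw [hc, coeff_expand_mul, coeff_UU, ← hc, Nat.sub_add_cancel h]
    · rw [coeff_expand_of_not_dvd _ _ _ h2]
      by_contra hn
      have := hf n (Ne.symm hn)
      apply h2
      exact (Nat.modEq_iff_dvd' h).1 this.symm
  · by_contra hn
    have := hf n (Ne.symm hn)
    rw [Nat.mod_eq_of_lt hr, Nat.mod_eq_of_lt (by omega)] at this
    omega

lemma UU_map {S : Type} [CommRing S] (d r : ℕ) (f : PowerSeries R) (φ : R →+* S) :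
    PowerSeries.map φ (UU d r f) = UU d r (PowerSeries.map φ f) := by
  ext n
  simp [coeff_UU]

lemma EE_inj' (k : ℕ) [NeZero k] {f g : PowerSeries R} (h : EE k f = EE k g) : f = g := by
  ext n
  have := congrArg (coeff (k * n)) h
  rwa [_root_.EE, coeff_expand_mul, coeff_expand_mul] at this

lemma Sp_th {d r : ℕ} (w : ℤ → ℤ) (k : ℕ) (h : ∀ m, w m ≠ 0 → ((k:ℤ) * m ^ 2) % d = (r : ℤ) % d) : Sp d r (th w k) := by
  intro n hn
  rw [th, coeff_mk] at hn
  obtain ⟨m, _, hm⟩ := Finset.exists_ne_zero_of_sum_ne_zero hn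
  split_ifs at hm with h2
  · have := h m hm
    rw [h2] at this
    exact_mod_cast this
  · exact absurd rfl hm

end USec

noncomputable section FourSec

lemma odd_sq4 (m : ℤ) (h : od m ≠ 0) : m ^ 2 % 4 = 1 := by
  unfold od at h
  have h2 : ¬ Even m := by intro h2; simp [h2] at h
  obtain ⟨c, rfl⟩ := Int.not_even_iff_odd.1 h2
  have : (2 * c + 1) ^ 2 = 4 * (c ^ 2 + c) + 1 := by ring
  omega

lemma SpQ : Sp 4 1 (th od 1) := by
  apply Sp_th
  intro m hm
  have := odd_sq4 m hm
  push_cast; omega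

lemma SpQ9 : Sp 4 1 (th od 9) := by
  apply Sp_th
  intro m hm
  have := odd_sq4 m hm
  push_cast; omega

lemma SpP (k : ℕ) (hk : 0 < k) : Sp 4 0 (tx (4 * k)) := by
  rw [← E_tx 4 k hk]
  exact Sp.EE _

lemma G_eq1 : GG * ty 36 * ty 4 ^ 3 = tx 1 * tx 2 ^ 2 * ty 9 := by
  have h1 := GF
  have h2 : tx 1 * ty 1 = ty 2 ^ 2 := lat1
  have h3 : tx 2 * ty 2 = ty 4 ^ 2 := lat1E 2
  apply mul_right_cancel₀ (ty_ne 1)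
  have h4 : (tx 2 * ty 2) ^ 2 = ty 4 ^ 4 := by rw [h3]; ring
  linear_combination ty 4 ^ 3 * h1 - ty 9 * h4 - tx 2 ^ 2 * ty 9 * h2

abbrev G4 : PowerSeries ℤ := UU 4 0 GG
abbrev VV : PowerSeries ℤ := UU 4 0 (th od 1 ^ 3 * th od 9)

lemma ty9_split : ty 9 = tx 36 - th od 9 := by
  have h := congrArg (EE 9) ty_split
  rw [map_sub] at h
  rwa [show EE 9 (ty 1) = ty 9 from E_ty 9 1 one_pos, show EE 9 (tx 4) = tx 36 from E_tx 9 4 (by norm_num),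
    show EE 9 (th od 1) = th od 9 from EE_th od 9 1 one_pos] at h

lemma G4_eq : G4 * ty 9 * ty 1 ^ 3 = tx 1 ^ 3 * tx 9 - VV := by
  have h := G_eq1
  have e36 : ty 36 = EE 4 (ty 9) := (E_ty 4 9 (by norm_num)).symm
  have e4 : ty 4 = EE 4 (ty 1) := (E_ty 4 1 (by norm_num)).symm
  have lhs : UU 4 0 (GG * ty 36 * ty 4 ^ 3) = G4 * ty 9 * ty 1 ^ 3 := by
    rw [e36, e4, ← map_pow, UU_mul 4 0 (by norm_num), UU_mul 4 0 (by norm_num)]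
  rw [← lhs, h, tx_split, ← Qsq, ty9_split]
  have hP : Sp 4 0 (tx 4) := SpP 1 one_pos
  have hP9 : Sp 4 0 (tx 36) := SpP 9 (by norm_num)
  have hQ := SpQ
  have hQ9 := SpQ9
  have expd : (tx 4 + th od 1) * (tx 4 ^ 2 + th od 1 ^ 2) * (tx 36 - th od 9) =
      1 * (tx 4 ^ 3 * tx 36) + tx 4 * th od 1 ^ 2 * tx 36 + tx 4 ^ 2 * th od 1 * tx 36 + th od 1 ^ 3 * tx 36
      - tx 4 ^ 3 * th od 9 - tx 4 * th od 1 ^ 2 * th od 9 - tx 4 ^ 2 * th od 1 * th od 9 - th od 1 ^ 3 * th od 9 := by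
    ring
  rw [expd]
  simp only [map_sub, map_add]
  rw [UU_zero ((hP.mul (hQ.pow 2)).mul hP9) (by norm_num), UU_zero (((hP.pow 2).mul hQ).mul hP9) (by norm_num),
    UU_zero ((hQ.pow 3).mul hP9) (by norm_num), UU_zero ((hP.pow 3).mul hQ9) (by norm_num),
    UU_zero ((hP.mul (hQ.pow 2)).mul hQ9) (by norm_num), UU_zero (((hP.pow 2).mul hQ).mul hQ9) (by norm_num)]
  have e1 : tx 4 ^ 3 * tx 36 = EE 4 (tx 1 ^ 3 * tx 9) := by
    rw [map_mul, map_pow, E_tx 4 1 one_pos, E_tx 4 9 (by norm_num)]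
  rw [e1, UU_mul 4 0 (by norm_num)]
  have e2 : UU 4 0 (1 : PowerSeries ℤ) = 1 := by
    have := UU_mul 4 0 (by norm_num) 1 (1 : PowerSeries ℤ)
    ext n
    rw [coeff_UU, coeff_one, coeff_one]
    simp
  rw [e2, tx_split]
  ring

lemma V_eq : VV * (tx 1 * tx 3 - ty 1 * ty 3) = (tx 1 ^ 4 - ty 1 ^ 4) * (tx 3 * tx 9 - ty 3 * ty 9) := by
  apply EE_inj 4
  have hV : EE 4 VV = th od 1 ^ 3 * th od 9 := by
    have := EE_UU (d := 4) (r := 0) (f := th od 1 ^ 3 * th od 9) (((SpQ.pow 3).mul SpQ9).congr (by norm_num)) (by norm_num)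
    rwa [pow_zero, one_mul] at this
  simp only [map_mul, map_sub, map_pow]
  rw [hV, E_tx 4 1 one_pos, E_ty 4 1 one_pos, E_tx 4 3 (by norm_num), E_ty 4 3 (by norm_num), E_tx 4 9 (by norm_num), E_ty 4 9 (by norm_num)]
  have h1 : tx 4 * tx 12 - ty 4 * ty 12 = th od 1 * th od 3 := lat3
  have h2 := congrArg (EE 3) h1
  simp only [map_mul, map_sub] at h2
  rw [E_tx 3 4 (by norm_num), E_ty 3 4 (by norm_num), E_tx 3 12 (by norm_num), E_ty 3 12 (by norm_num),
    show EE 3 (th od 1) = th od 3 from EE_th od 3 1 one_pos, show EE 3 (th od 3) = th od 9 from EE_th od 3 3 (by norm_num)] at h2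
  norm_num at h2 ⊢
  rw [h1, h2, ← Q4]
  ring

lemma star : 4 * G4 * ty 9 * ty 1 ^ 4 =
    -12 * ty 1 ^ 2 * ty 3 * tx 3 * tx 9 + ty 9 * (ty 1 ^ 2 + 3 * ty 3 ^ 2) ^ 2 := by
  have h1 := G4_eq
  have h2 := V_eq
  have r1 := rel1
  have r2 := rel2
  apply mul_right_cancel₀ Delta_ne
  generalize tx 1 = x at *
  generalize ty 1 = y at *
  generalize tx 3 = X at *
  generalize ty 3 = Z at *
  linear_combination 4 * y * (x * X - y * Z) * h1 - 4 * y * h2 - 4 * y ^ 2 * tx 9 * r1 + ty 9 * r2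

end FourSec

noncomputable section ThreeSec

abbrev uu : PowerSeries ℤ := ty 9 - ty 1
abbrev MM : PowerSeries ℤ := ty 9 ^ 2 + ty 9 * uu + uu ^ 2
abbrev NN : PowerSeries ℤ := ty 9 ^ 3 - uu ^ 3
abbrev nn : PowerSeries ℤ := UU 3 0 NN
abbrev vv : PowerSeries ℤ := UU 3 2 (uu ^ 2)

lemma Spu : Sp 3 1 uu := by
  have h := th_dvd sg 3 1 (by norm_num) one_pos
  have h2 : (fun j : ℤ => sg (((3:ℕ):ℤ) * j)) = sg := by
    funext j; unfold sg; simp [parity_simps]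
    try congr 1
    try simp [Int.even_iff]
    try omega
  have h3 : ty 1 = th (fun m => if ((3:ℕ):ℤ) ∣ m then sg m else 0) 1 + th (fun m => if ((3:ℕ):ℤ) ∣ m then 0 else sg m) 1 := by
    rw [← th_add]
    change th sg 1 = _
    congr 1
    funext m
    split_ifs <;> simp
  rw [h, h2] at h3
  have h4 : uu = - th (fun m => if ((3:ℕ):ℤ) ∣ m then 0 else sg m) 1 := by
    have h5 : th sg (1 * 3 ^ 2) = ty 9 := rfl
    rw [h5] at h3
    linear_combination -h3
  rw [h4]
  apply Sp.neg
  apply Sp_th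
  intro m hm
  have h5 : ¬ (3:ℤ) ∣ m := by
    intro h5; apply hm; rw [if_pos]; exact_mod_cast h5
  push_cast
  rw [one_mul, pow_two, Int.mul_emod]
  rcases (show m % 3 = 1 ∨ m % 3 = 2 by omega) with h | h <;> rw [h] <;> rfl

lemma SpA : Sp 3 0 (ty 9) := by
  rw [← E_ty 3 3 (by norm_num)]
  exact Sp.EE _

lemma SpN : Sp 3 0 NN := (SpA.pow 3).sub ((Spu.pow 3).congr (by norm_num))

lemma EE_nn : EE 3 nn = NN := by
  have := EE_UU SpN (by norm_num)
  rwa [pow_zero, one_mul] at this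

lemma e9 : ty 9 = EE 3 (ty 3) := (E_ty 3 3 (by norm_num)).symm
lemma e3 : ty 3 = EE 3 (ty 1) := (E_ty 3 1 (by norm_num)).symm
lemma f9 : tx 9 = EE 3 (tx 3) := (E_tx 3 3 (by norm_num)).symm
lemma f3 : tx 3 = EE 3 (tx 1) := (E_tx 3 1 (by norm_num)).symm

lemma UM2 : UU 3 2 (MM ^ 2) = 3 * (ty 3 ^ 2 * vv) := by
  have expd : MM ^ 2 = ty 9 ^ 4 + ty 9 ^ 3 * uu + ty 9 ^ 3 * uu + (uu ^ 2 * ty 9 ^ 2 + uu ^ 2 * ty 9 ^ 2 + uu ^ 2 * ty 9 ^ 2)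
    + ty 9 * uu ^ 3 + ty 9 * uu ^ 3 + uu ^ 4 := by unfold MM; ring
  rw [expd]
  have hA := SpA
  have hu := Spu
  have hm : UU 3 2 (uu ^ 2 * ty 9 ^ 2) = vv * ty 3 ^ 2 := by
    rw [show ty 9 ^ 2 = EE 3 (ty 3 ^ 2) by rw [map_pow, ← e9], UU_mul 3 2 (by norm_num)]
  simp only [map_add]
  rw [hm, UU_zero (hA.pow 4) (by norm_num), UU_zero ((hA.pow 3).mul hu) (by norm_num),
    UU_zero (hA.mul (hu.pow 3)) (by norm_num), UU_zero (hu.pow 4) (by norm_num)]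
  ring

abbrev KK : PowerSeries ℤ := ty 1 ^ 4 * ty 3 * UU 3 2 (MM ^ 4) +
  2 * nn ^ 2 * ty 3 ^ 2 * vv * (ty 1 ^ 2 * ty 3 - 2 * ty 1 * tx 1 * tx 3)

lemma UU_ofNat (k : ℕ) (f : PowerSeries ℤ) (r : ℕ) (_ : r < 3) :
    UU 3 r ((k : PowerSeries ℤ) * f) = (k : PowerSeries ℤ) * UU 3 r f := by
  rw [← nsmul_eq_mul, map_nsmul, nsmul_eq_mul]

lemma main9 : 4 * UU 3 2 G4 * (ty 3 * nn ^ 4) = 9 * KK := by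
  have h := star
  have hN : ty 1 * MM = NN := by unfold MM NN uu; ring
  have h2 : ((4:ℕ) : PowerSeries ℤ) * (G4 * EE 3 (ty 3 * nn ^ 4)) + ((12:ℕ) : PowerSeries ℤ) * (MM ^ 2 * EE 3 (nn ^ 2 * ty 1 * tx 1 * tx 3)) =
      1 * EE 3 (ty 3 * nn ^ 4) + ((6:ℕ) : PowerSeries ℤ) * (MM ^ 2 * EE 3 (ty 3 * nn ^ 2 * ty 1 ^ 2)) +
      ((9:ℕ) : PowerSeries ℤ) * (MM ^ 4 * EE 3 (ty 3 * ty 1 ^ 4)) := by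
    simp only [map_mul, map_pow, EE_nn]
    rw [← e9, ← e3, ← f3, ← f9, ← hN]
    push_cast
    linear_combination MM ^ 4 * h
  have h3 := congrArg (UU 3 2) h2
  rw [map_add, map_add, map_add, UU_ofNat _ _ _ (by norm_num), UU_ofNat _ _ _ (by norm_num), UU_ofNat _ _ _ (by norm_num),
    UU_ofNat _ _ _ (by norm_num), UU_mul 3 2 (by norm_num), UU_mul 3 2 (by norm_num), UU_mul 3 2 (by norm_num),
    UU_mul 3 2 (by norm_num), UU_mul 3 2 (by norm_num), UM2, UU_zero Sp.one (by norm_num)] at h3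
  push_cast at h3
  unfold KK
  linear_combination h3

lemma cc_W : constantCoeff (ty 3 * nn ^ 4) = 1 := by
  have : constantCoeff nn = 1 := by
    have h := congrArg (constantCoeff (R := ℤ)) EE_nn
    rw [constantCoeff_expand] at h
    rw [h]
    simp [NN, uu, cc_ty]
  rw [map_mul, map_pow, this, cc_ty]; norm_num

lemma exists_J : ∃ J : PowerSeries ℤ, (ty 3 * nn ^ 4) * J = 1 := by
  have : IsUnit (ty 3 * nn ^ 4) := by
    rw [PowerSeries.isUnit_iff_constantCoeff, cc_W]; exact isUnit_one
  exact this.exists_right_inv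

end ThreeSec

noncomputable section ModSec

abbrev ph : PowerSeries ℤ →+* PowerSeries (ZMod 3) := PowerSeries.map (Int.castRingHom (ZMod 3))

instance : CharP (PowerSeries (ZMod 3)) 3 := by
  have : Function.Injective (C (R := ZMod 3)) := PowerSeries.C_injective
  exact charP_of_injective_ringHom this 3

lemma frob3 (f : PowerSeries (ZMod 3)) : EE 3 f = f ^ 3 := by
  have h := MvPowerSeries.map_frobenius_expand (σ := Unit) (R := ZMod 3) 3 (NeZero.ne 3) (f := f)
  rw [ZMod.frobenius_zmod, MvPowerSeries.map_id] at h
  exact h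

lemma ph_E3 (f : PowerSeries ℤ) : ph (EE 3 f) = ph f ^ 3 := by
  rw [← frob3, EE, map_expand]

lemma three_zero : (3 : PowerSeries (ZMod 3)) = 0 := by
  have := CharP.cast_eq_zero (PowerSeries (ZMod 3)) 3
  exact_mod_cast this

lemma fix_EE2 (e : PowerSeries (ZMod 3)) (h : EE 2 e = e) : e = C (constantCoeff e) := by
  ext n
  rw [coeff_C]
  induction n using Nat.strong_induction_on with
  | _ n ih =>
    split_ifs with h0
    · rw [h0]; simp
    · by_cases h2 : 2 ∣ n
      · obtain ⟨m, rfl⟩ := h2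
        rw [← h, EE, coeff_expand_mul, ih m (by omega), if_neg (by omega)]
      · rw [← h, EE, coeff_expand_of_not_dvd _ _ _ h2]

lemma e_two : ph (tx 1) ^ 4 + ph (ty 1) ^ 4 = 2 := by
  have h1 : tx 1 * ty 1 = ty 2 ^ 2 := lat1
  have h2 : tx 1 ^ 2 + ty 1 ^ 2 = 2 * tx 2 ^ 2 := lat2
  have h3 : tx 1 ^ 4 + ty 1 ^ 4 = 4 * tx 2 ^ 4 - 2 * ty 2 ^ 4 := by
    linear_combination (tx 1 ^ 2 + ty 1 ^ 2 + 2 * tx 2 ^ 2) * h2 - 2 * (tx 1 * ty 1 + ty 2 ^ 2) * h1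
  have h4 := congrArg ph h3
  simp only [map_add, map_sub, map_mul, map_pow, map_ofNat] at h4
  have h5 := fix_EE2 (ph (tx 1) ^ 4 + ph (ty 1) ^ 4) (by
    rw [map_add, map_pow, map_pow, EE, ← map_expand, ← map_expand]
    rw [show expand 2 (NeZero.ne 2) (tx 1) = tx 2 from E_tx 2 1 one_pos, show expand 2 (NeZero.ne 2) (ty 1) = ty 2 from E_ty 2 1 one_pos]
    rw [h4]
    linear_combination (-ph (tx 2) ^ 4 + ph (ty 2) ^ 4) * three_zero)
  rw [h5]
  have c1 : ∀ k, constantCoeff (ph (tx k)) = 1 := fun k => by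
    rw [← coeff_zero_eq_constantCoeff_apply, coeff_map, coeff_zero_eq_constantCoeff_apply, cc_tx]; simp
  have c2 : ∀ k, constantCoeff (ph (ty k)) = 1 := fun k => by
    rw [← coeff_zero_eq_constantCoeff_apply, coeff_map, coeff_zero_eq_constantCoeff_apply, cc_ty]; simp
  rw [map_add, map_pow, map_pow, c1, c2]
  norm_num
  exact map_ofNat _ 2

lemma ph_y3 : ph (ty 3) = ph (ty 1) ^ 3 := by rw [e3, ph_E3]
lemma ph_x3 : ph (tx 3) = ph (tx 1) ^ 3 := by rw [f3, ph_E3]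
lemma ph_y9 : ph (ty 9) = ph (ty 1) ^ 9 := by rw [e9, ph_E3, ph_y3]; ring

lemma ph_M : ph MM = ph (ty 1) ^ 2 := by
  have h : MM = ty 1 ^ 2 + 3 * (ty 9 * uu) := by unfold MM uu; ring
  rw [h, map_add, map_mul, map_ofNat, three_zero, map_pow]; ring

lemma ph_N : ph NN = ph (ty 1) ^ 3 := by
  have hN : ty 1 * MM = NN := by unfold MM NN uu; ring
  rw [← hN, map_mul, ph_M]; ring

lemma ph_n : ph nn = ph (ty 1) := by
  apply EE_inj' 3
  rw [frob3, frob3, ← ph_E3, EE_nn, ph_N]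

lemma ph_U2 : UU 3 2 (ph (ty 1) ^ 2) = ph vv := by
  rw [← map_pow, ← UU_map]
  congr 1
  have : ty 1 ^ 2 = ty 9 ^ 2 - ty 9 * uu - ty 9 * uu + uu ^ 2 := by unfold uu; ring
  rw [this, map_add, map_sub, map_sub, UU_zero (SpA.pow 2) (by norm_num), UU_zero (SpA.mul Spu) (by norm_num)]
  simp

lemma ph_U4 : ph (UU 3 2 (MM ^ 4)) = ph (ty 1) ^ 2 * ph vv := by
  rw [UU_map, map_pow, ph_M]
  have : (ph (ty 1) ^ 2) ^ 4 = ph (ty 1) ^ 2 * EE 3 (ph (ty 1) ^ 2) := by rw [frob3]; ring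
  rw [this, UU_mul 3 2 (by norm_num), ph_U2]; ring

lemma ph_K : ph KK = - ph vv * ph (ty 1) ^ 9 := by
  have hU := ph_U4
  have hn := ph_n
  unfold KK
  generalize nn = n at *
  generalize UU 3 2 (MM ^ 4) = U at *
  simp only [map_add, map_sub, map_mul, map_pow, map_ofNat]
  rw [hU, hn, ph_y3, ph_x3]
  linear_combination (-(ph vv) * ph (ty 1) ^ 9) * e_two + (ph vv * ph (ty 1) ^ 9 * (ph (ty 1) ^ 4 - ph (tx 1) ^ 4)) * three_zero

lemma ph_ty_ne : ph (ty 1) ≠ 0 := by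
  intro h
  have : constantCoeff (ph (ty 1)) = 1 := by
    rw [← coeff_zero_eq_constantCoeff_apply, coeff_map, coeff_zero_eq_constantCoeff_apply, cc_ty]; simp
  rw [h] at this
  simp at this

lemma ph_KJ (J : PowerSeries ℤ) (hJ : (ty 3 * nn ^ 4) * J = 1) : ph (KK * J) = - (ph vv * ph (ty 1) ^ 2) := by
  have h := congrArg ph hJ
  simp only [map_mul, map_pow, map_one] at h
  rw [ph_n, ph_y3] at h
  rw [map_mul, ph_K]
  linear_combination (-(ph vv) * ph (ty 1) ^ 2) * h

lemma Sp_even {r : ℕ} {f : PowerSeries ℤ} (h : Sp 4 r f) : Sp 2 r f := by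
  intro n hn
  have := h n hn
  omega

lemma t_even : Sp 2 0 (ph vv * ph (ty 1) ^ 2) := by
  have hP : Sp 2 0 (ph (tx 4)) := (Sp_even (SpP 1 one_pos)).map _
  have hQ : Sp 2 1 (ph (th od 1)) := (Sp_even SpQ).map _
  have ht : X ^ 2 * EE 3 (ph vv * ph (ty 1) ^ 2) = (ph (ty 1) ^ 12 - ph (ty 1) ^ 4) ^ 2 := by
    have h1 := EE_UU (d := 3) (r := 2) (f := uu ^ 2) ((Spu.pow 2).congr (by norm_num)) (by norm_num)
    have h2 := congrArg ph h1
    rw [map_mul, map_pow ph uu, map_sub, ph_y9, map_pow ph X, map_X, ph_E3] at h2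
    rw [frob3]
    linear_combination ph (ty 1) ^ 6 * h2
  have hy : ph (ty 1) = ph (tx 4) - ph (th od 1) := by rw [← map_sub, ty_split]
  have hx : ph (tx 1) = ph (tx 4) + ph (th od 1) := by rw [← map_add, tx_split]
  have he := e_two
  rw [hx, hy] at he
  set P := ph (tx 4)
  set Q := ph (th od 1)
  have ho : ph (ty 1) ^ 4 = 1 + (- (P ^ 3 * Q + P * Q ^ 3)) := by
    rw [hy]
    linear_combination 2 * he + (1 - P ^ 4 - Q ^ 4 - 6 * P ^ 2 * Q ^ 2 - P ^ 3 * Q - P * Q ^ 3) * three_zero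
  set o := - (P ^ 3 * Q + P * Q ^ 3) with hoo
  have So : Sp 2 1 o :=
    ((((hP.pow 3).mul hQ).congr (by norm_num)).add ((hP.mul (hQ.pow 3)).congr (by norm_num))).neg
  have h12 : ph (ty 1) ^ 12 - ph (ty 1) ^ 4 = o ^ 3 - o := by
    have : ph (ty 1) ^ 12 = (ph (ty 1) ^ 4) ^ 3 := by ring
    rw [this, ho]
    linear_combination (o + o ^ 2) * three_zero
  have Sq : Sp 2 0 ((ph (ty 1) ^ 12 - ph (ty 1) ^ 4) ^ 2) := by
    rw [h12]
    exact ((((So.pow 3).congr (by norm_num)).sub So).pow 2).congr (by norm_num)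
  rw [← ht] at Sq
  intro n hn
  have := Sq (3 * n + 2) (by
    rw [coeff_X_pow_mul, coeff_expand_mul]; exact hn)
  omega

lemma final (n : ℕ) : Rbar 4 9 (24 * n + 20) ≡ 0 [MOD 27] := by
  obtain ⟨J, hJ⟩ := exists_J
  have h1 : 4 * UU 3 2 G4 = 9 * (KK * J) := by
    linear_combination J * main9 - 4 * UU 3 2 G4 * hJ
  have h2 := congrArg (coeff (2 * n + 1)) h1
  have c4 : (4 : PowerSeries ℤ) = C 4 := by simp
  have c9 : (9 : PowerSeries ℤ) = C 9 := by simp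
  rw [c4, c9, coeff_C_mul, coeff_C_mul, coeff_UU, coeff_UU, GG, coeff_mk] at h2
  have h3 : coeff (2 * n + 1) (ph (KK * J)) = 0 := by
    rw [ph_KJ J hJ, map_neg, neg_eq_zero]
    by_contra hn
    have := t_even _ hn
    omega
  rw [coeff_map] at h3
  have h4 : (3:ℤ) ∣ coeff (2 * n + 1) (KK * J) := by
    exact (ZMod.intCast_zmod_eq_zero_iff_dvd _ 3).1 h3
  rw [show 4 * (3 * (2 * n + 1) + 2) + 0 = 24 * n + 20 by ring] at h2
  rw [Nat.modEq_zero_iff_dvd]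
  omega

end ModSec

end Work

theorem Rbar_four_nine_24n_20_mod_27 (n : ℕ) :
    Rbar 4 9 (24 * n + 20) ≡ 0 [MOD 27] := by
  exact final n
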